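/- (Score decomposition for arc-eager, the bookkeeping underlying the score-annotated deduction rules.) Let t be a complete arc-eager transition sequence for a sentence of length n ≥ 1 and let (f_sh, f_ra, f_rl, f_re) be any arc-eager parameterization. For each index i ∈ {0,…,n}, let k_i be the stack-top feature (⊥ if the stack is empty) of the configuration in which i is pushed; for each i ∈ {1,…,n}, let p_i be the buffer-front feature (n+1 if the buffer is empty) of the configuration in which i is popped. Then F(t) = f_sh(⊥, 0) + Σ_{i pushed by sh, i ≥ 1} ( f_sh(k_i, i) + f_rl(i, p_i) ) + Σ_{i pushed by ra} ( f_ra(k_i, i) + f_re(i, p_i) ), and moreover A(t) = { (p_i, i) : i ≥ 1 pushed by sh } ∪ { (k_i, i) : i pushed by ra }. -/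

import Mathlib

/-- A parser configuration: a stack of indices (head of the list = top of stack),
a buffer of indices (head of the list = front of buffer), and a set of arcs
`(h, m)` meaning `h` is the head of modifier `m`. -/
structure Config where
  stack : List ℕ
  buffer : List ℕ
  arcs : Finset (ℕ × ℕ)

/-- Initial configuration for a sentence of length `n`:
empty stack, buffer `[0, 1, …, n]` (ROOT is index 0), empty arc set. -/
def initConfig (n : ℕ) : Config := ⟨[], List.range (n + 1), ∅⟩

/-- Stack-top feature of a configuration: `none` plays the role of the dummy index ⊥
used when the stack is empty. -/
def stackFeat (c : Config) : Option ℕ := c.stack.head?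

/-- Buffer-front feature of a configuration: the end-marker index `n + 1`
when the buffer is empty. -/
def bufFeat (n : ℕ) (c : Config) : ℕ := c.buffer.headD (n + 1)

/-- Arc-eager transition labels. -/
inductive ETrans
  | sh | rl | ra | re
deriving DecidableEq

/-- Single arc-eager transitions between configurations. -/
inductive EStep : Config → ETrans → Config → Prop
  | sh (σ b β A) : EStep ⟨σ, b :: β, A⟩ .sh ⟨b :: σ, β, A⟩
  | rl (s σ b β A) (h : ∀ x, (x, s) ∉ A) :
      EStep ⟨s :: σ, b :: β, A⟩ .rl ⟨σ, b :: β, insert (b, s) A⟩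
  | ra (s σ b β A) :
      EStep ⟨s :: σ, b :: β, A⟩ .ra ⟨b :: s :: σ, β, insert (s, b) A⟩
  | re (s σ β A) (h : ∃ x, (x, s) ∈ A) :
      EStep ⟨s :: σ, β, A⟩ .re ⟨σ, β, A⟩

/-- `ETrace c t c'` holds when `t` is a list of (configuration, transition) pairs,
each transition taken in the recorded configuration, leading from `c` to `c'`. -/
inductive ETrace : Config → List (Config × ETrans) → Config → Prop
  | nil (c) : ETrace c [] c
  | cons {c c' cf : Config} {τ : ETrans} {rest} :
      EStep c τ c' → ETrace c' rest cf → ETrace c ((c, τ) :: rest) cf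

/-- Score of an arc-eager transition sequence under parameterization
`(fsh, fra, frl, fre)`: the sum, over the transitions, of the corresponding
scoring function evaluated at the feature pair of the configuration in which
the transition is taken. -/
def escore (n : ℕ) (fsh fra frl fre : Option ℕ → ℕ → ℝ)
    (t : List (Config × ETrans)) : ℝ :=
  (t.map fun e =>
    (match e.2 with
      | ETrans.sh => fsh
      | ETrans.ra => fra
      | ETrans.rl => frl
      | ETrans.re => fre) (stackFeat e.1) (bufFeat n e.1)).sum

/-- Arc-hybrid transition labels. -/
inductive HTrans
  | sh | rr | rl
deriving DecidableEq

/-- Single arc-hybrid transitions between configurations. -/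
inductive HStep : Config → HTrans → Config → Prop
  | sh (σ b β A) : HStep ⟨σ, b :: β, A⟩ .sh ⟨b :: σ, β, A⟩
  | rr (s0 s1 σ β A) :
      HStep ⟨s0 :: s1 :: σ, β, A⟩ .rr ⟨s1 :: σ, β, insert (s1, s0) A⟩
  | rl (s σ b β A) :
      HStep ⟨s :: σ, b :: β, A⟩ .rl ⟨σ, b :: β, insert (b, s) A⟩

/-- `HTrace c t c'` holds when `t` is a list of (configuration, transition) pairs,
each transition taken in the recorded configuration, leading from `c` to `c'`. -/
inductive HTrace : Config → List (Config × HTrans) → Config → Prop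
  | nil (c) : HTrace c [] c
  | cons {c c' cf : Config} {τ : HTrans} {rest} :
      HStep c τ c' → HTrace c' rest cf → HTrace c ((c, τ) :: rest) cf

/-- Score of an arc-hybrid transition sequence under parameterization
`(gsh, grr, grl)`. -/
def hscore (n : ℕ) (gsh grr grl : Option ℕ → ℕ → ℝ)
    (t : List (Config × HTrans)) : ℝ :=
  (t.map fun e =>
    (match e.2 with
      | HTrans.sh => gsh
      | HTrans.rr => grr
      | HTrans.rl => grl) (stackFeat e.1) (bufFeat n e.1)).sum

/-- Index `i` is pushed by a sh transition somewhere in `t`. -/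
def pushedBySh (t : List (Config × ETrans)) (i : ℕ) : Bool :=
  t.any fun e => e.2 == ETrans.sh && e.1.buffer.head? == some i

/-- Index `i` is pushed by an ra transition somewhere in `t`. -/
def pushedByRa (t : List (Config × ETrans)) (i : ℕ) : Bool :=
  t.any fun e => e.2 == ETrans.ra && e.1.buffer.head? == some i

open Classical in
/-- Pending cost of a stack element. -/
noncomputable def pendCost (frl fre : Option ℕ → ℕ → ℝ) (p : ℕ → ℕ) (A : Finset (ℕ × ℕ)) (s : ℕ) : ℝ :=
  if s = 0 then 0 else if ∃ x, (x, s) ∈ A then fre (some s) (p s) else frl (some s) (p s)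

/-- Cost of a buffer element. -/
noncomputable def bufCost (fsh fra frl fre : Option ℕ → ℕ → ℝ) (k : ℕ → Option ℕ) (p : ℕ → ℕ)
    (t : List (Config × ETrans)) (i : ℕ) : ℝ :=
  (if pushedBySh t i = true then fsh (k i) i + frl (some i) (p i) else 0)
  + (if pushedByRa t i = true then fra (k i) i + fre (some i) (p i) else 0)

theorem pendCost_insert (frl fre : Option ℕ → ℕ → ℝ) (p : ℕ → ℕ) (A : Finset (ℕ × ℕ)) (a b i : ℕ)
    (h : i ≠ b) : pendCost frl fre p (insert (a, b) A) i = pendCost frl fre p A i := by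
  have : (∃ x, (x, i) ∈ insert (a, b) A) ↔ ∃ x, (x, i) ∈ A := by simp [h]
  unfold pendCost
  by_cases hA : ∃ x, (x, i) ∈ A
  · rw [if_pos hA, if_pos (this.2 hA)]
  · rw [if_neg hA, if_neg (fun h => hA (this.1 h))]

theorem etrace_mem {c cf : Config} {t : List (Config × ETrans)} (h : ETrace c t cf) :
    ∀ x ∈ cf.stack, x ∈ c.stack ∨ x ∈ c.buffer := by
  induction h with
  | nil c => intro x hx; exact Or.inl hx
  | cons hs _ ih =>
    intro x hx
    have := ih x hx
    cases hs <;> simp only [List.mem_cons] at * <;> tauto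

theorem pushed_cons (c : Config) (τ : ETrans) (t : List (Config × ETrans)) (i : ℕ) :
    (pushedBySh ((c, τ) :: t) i = true ↔
      (τ = ETrans.sh ∧ c.buffer.head? = some i) ∨ pushedBySh t i = true) ∧
    (pushedByRa ((c, τ) :: t) i = true ↔
      (τ = ETrans.ra ∧ c.buffer.head? = some i) ∨ pushedByRa t i = true) := by
  simp [pushedBySh, pushedByRa]

theorem etrace_pushed {c cf : Config} {t : List (Config × ETrans)} (h : ETrace c t cf) :
    ∀ i, (pushedBySh t i = true ∨ pushedByRa t i = true) → i ∈ c.buffer := by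
  induction h with
  | nil c => intro i hi; simp [pushedBySh, pushedByRa] at hi
  | cons hs _ ih =>
    intro i hi
    rw [(pushed_cons _ _ _ _).1, (pushed_cons _ _ _ _).2] at hi
    have := ih i
    cases hs <;> simp_all <;> grind

theorem main_aux (n : ℕ) (fsh fra frl fre : Option ℕ → ℕ → ℝ)
    (k : ℕ → Option ℕ) (p : ℕ → ℕ) {c cf : Config} {t : List (Config × ETrans)}
    (h : ETrace c t cf) :
    cf.stack = [0] → cf.buffer = [] → 0 ∈ c.stack → (c.stack ++ c.buffer).Nodup →
    (∀ i ∈ c.buffer, ∀ x, (x, i) ∉ c.arcs) →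
    (∀ e ∈ t, (e.2 = ETrans.sh ∨ e.2 = ETrans.ra) →
        ∀ i, e.1.buffer.head? = some i → stackFeat e.1 = k i) →
    (∀ e ∈ t, (e.2 = ETrans.rl ∨ e.2 = ETrans.re) →
        ∀ i, e.1.stack.head? = some i → bufFeat n e.1 = p i) →
    escore n fsh fra frl fre t =
      (c.buffer.map (bufCost fsh fra frl fre k p t)).sum
        + (c.stack.map (pendCost frl fre p c.arcs)).sum ∧
    ∀ a b, (a, b) ∈ cf.arcs ↔ ((a, b) ∈ c.arcs ∨
      (b ∈ c.buffer ∧ pushedBySh t b = true ∧ a = p b) ∨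
      (b ∈ c.buffer ∧ pushedByRa t b = true ∧ a = (k b).getD 0) ∨
      (b ∈ c.stack ∧ b ≠ 0 ∧ (∀ x, (x, b) ∉ c.arcs) ∧ a = p b)) := by
  induction h with
  | nil c =>
    intro h1 h2 _ _ _ _ _
    simp +contextual [h1, h2, escore, pendCost]
  | @cons c c' cf τ rest hs htr ih =>
    intro h1 h2 h0 hnd hA hk hp
    have hk' := fun e he => hk e (List.mem_cons_of_mem _ he)
    have hp' := fun e he => hp e (List.mem_cons_of_mem _ he)
    have hk0 := hk _ List.mem_cons_self
    have hp0 := hp _ List.mem_cons_self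
    have hpu := etrace_pushed htr
    have hm := etrace_mem htr 0 (by simp [h1])
    have ih := fun a b d => ih h1 h2 a b d hk' hp'
    have hpc := pushed_cons c τ rest
    clear hk hp hk' hp'
    have hes : escore n fsh fra frl fre ((c, τ) :: rest) = (match τ with
      | ETrans.sh => fsh
      | ETrans.ra => fra
      | ETrans.rl => frl
      | ETrans.re => fre) (stackFeat c) (bufFeat n c) + escore n fsh fra frl fre rest := by
      simp [escore]
    rw [hes]
    cases hs with
    | sh σ b β A =>
      simp only [List.head?_cons, Option.some.injEq, forall_eq', true_or, forall_const, true_and, reduceCtorEq, false_and, false_or] at *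
      obtain ⟨i1, i2⟩ := ih (by grind) (by grind) (by grind)
      have hb : b ∉ β := by grind
      have hbu : pushedByRa rest b ≠ true := fun h => hb (hpu b (Or.inr h))
      have hb0 : b ≠ 0 := by grind
      have hbA := hA b (by simp)
      constructor
      · have e1 : β.map (bufCost fsh fra frl fre k p ((⟨σ, b :: β, A⟩, ETrans.sh) :: rest)) = β.map (bufCost fsh fra frl fre k p rest) := by
          apply List.map_congr_left
          intro i hi
          have : b ≠ i := by grind
          simp only [bufCost, hpc, this, false_or]
        rw [i1, List.map_cons, List.sum_cons, List.map_cons, List.sum_cons, e1]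
        simp [bufCost, hpc, hbu, pendCost, hb0, hbA, hk0, bufFeat]
        ring
      · intro a b'
        rw [i2]
        grind
    | ra s σ b β A =>
      simp only [List.head?_cons, Option.some.injEq, forall_eq', or_true, forall_const, true_and, reduceCtorEq, false_and, false_or] at *
      obtain ⟨i1, i2⟩ := ih (by grind) (by grind) (by grind)
      have hb : b ∉ β := by grind
      have hbu : pushedBySh rest b ≠ true := fun h => hb (hpu b (Or.inl h))
      have hb0 : b ≠ 0 := by grind
      have hbA := hA b (by simp)
      have hks : k b = some s := by rw [← hk0]; simp [stackFeat]
      constructor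
      · have e1 : β.map (bufCost fsh fra frl fre k p ((⟨s :: σ, b :: β, A⟩, ETrans.ra) :: rest)) = β.map (bufCost fsh fra frl fre k p rest) := by
          apply List.map_congr_left
          intro i hi
          have : b ≠ i := by grind
          simp only [bufCost, hpc, this, false_or]
        have e2 : (s :: σ).map (pendCost frl fre p (insert (s, b) A)) = (s :: σ).map (pendCost frl fre p A) := by
          apply List.map_congr_left
          intro i hi
          have : i ≠ b := by grind
          exact pendCost_insert _ _ _ _ _ _ _ this
        rw [i1, List.map_cons, List.sum_cons, e2, List.map_cons (l := β), List.sum_cons, e1]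
        simp [bufCost, hpc, hbu, pendCost, hb0, hk0, bufFeat]
        ring
      · intro a b'
        rw [i2]
        grind
    | rl s σ b β A hh =>
      simp only [List.head?_cons, Option.some.injEq, forall_eq', true_or, forall_const, true_and, reduceCtorEq, false_and, false_or] at *
      have hs0 : s ≠ 0 := by grind
      obtain ⟨i1, i2⟩ := ih (by grind) (by grind) (by grind)
      have hps : p s = b := by rw [← hp0]; simp [bufFeat]
      constructor
      · have e1 : (b :: β).map (bufCost fsh fra frl fre k p ((⟨s :: σ, b :: β, A⟩, ETrans.rl) :: rest)) = (b :: β).map (bufCost fsh fra frl fre k p rest) := by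
          apply List.map_congr_left
          intro i hi
          simp only [bufCost, hpc]
        have e2 : σ.map (pendCost frl fre p (insert (b, s) A)) = σ.map (pendCost frl fre p A) := by
          apply List.map_congr_left
          intro i hi
          have : i ≠ s := by grind
          exact pendCost_insert _ _ _ _ _ _ _ this
        rw [i1, e1, e2, List.map_cons (l := σ), List.sum_cons]
        simp [hh, pendCost, hs0, hp0, stackFeat]
        ring
      · intro a b'
        rw [i2]
        grind
    | re s σ β A hh =>
      simp only [List.head?_cons, Option.some.injEq, forall_eq', or_true, forall_const, true_and, reduceCtorEq, false_and, false_or] at *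
      have hs0 : s ≠ 0 := by grind
      obtain ⟨i1, i2⟩ := ih (by grind) (by grind) (by grind)
      constructor
      · have e1 : β.map (bufCost fsh fra frl fre k p ((⟨s :: σ, β, A⟩, ETrans.re) :: rest)) = β.map (bufCost fsh fra frl fre k p rest) := by
          apply List.map_congr_left
          intro i hi
          simp only [bufCost, hpc]
        rw [i1, e1, List.map_cons (l := σ), List.sum_cons]
        simp [hh, pendCost, hs0, hp0, stackFeat]
        ring
      · intro a b'
        rw [i2]
        grind

/-- **Score decomposition for arc-eager** (the bookkeeping underlying the
score-annotated deduction rules). Here `k i` is the stack-top feature of the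
configuration in which `i` is pushed and `p i` is the buffer-front feature of
the configuration in which `i` is popped (encoded by the hypotheses `hk`, `hp`,
which pin these values down since each index is pushed/popped exactly once). -/
theorem arc_eager_score_decomposition
    (n : ℕ) (hn : 1 ≤ n)
    (fsh fra frl fre : Option ℕ → ℕ → ℝ)
    (t : List (Config × ETrans)) (A : Finset (ℕ × ℕ))
    (ht : ETrace (initConfig n) t ⟨[0], [], A⟩)
    (k : ℕ → Option ℕ) (p : ℕ → ℕ)
    (hk : ∀ e ∈ t, (e.2 = ETrans.sh ∨ e.2 = ETrans.ra) →
        ∀ i, e.1.buffer.head? = some i → stackFeat e.1 = k i)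
    (hp : ∀ e ∈ t, (e.2 = ETrans.rl ∨ e.2 = ETrans.re) →
        ∀ i, e.1.stack.head? = some i → bufFeat n e.1 = p i) :
    escore n fsh fra frl fre t =
        fsh none 0
        + ∑ i ∈ (Finset.Icc 1 n).filter (fun i => pushedBySh t i = true),
            (fsh (k i) i + frl (some i) (p i))
        + ∑ i ∈ (Finset.Icc 1 n).filter (fun i => pushedByRa t i = true),
            (fra (k i) i + fre (some i) (p i))
    ∧ A = ((Finset.Icc 1 n).filter (fun i => pushedBySh t i = true)).image
              (fun i => (p i, i))
          ∪ ((Finset.Icc 1 n).filter (fun i => pushedByRa t i = true)).image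
              (fun i => ((k i).getD 0, i)) := by
  have hr : List.range (n + 1) = 0 :: List.range' 1 n := by
    rw [List.range_eq_range', List.range'_succ]
  rw [initConfig, hr] at ht
  cases ht with
  | @cons _ c' _ τ rest hs htr =>
  cases hs with
  | sh =>
    have hmem : ∀ i, i ∈ List.range' 1 n ↔ 1 ≤ i ∧ i ≤ n := by
      intro i; rw [List.mem_range'_1]; omega
    have hpc := pushed_cons ⟨[], 0 :: List.range' 1 n, ∅⟩ ETrans.sh rest
    obtain ⟨i1, i2⟩ := main_aux n fsh fra frl fre k p htr rfl rfl (by simp)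
      (by simp [List.nodup_range']) (by simp)
      (fun e he => hk e (List.mem_cons_of_mem _ he))
      (fun e he => hp e (List.mem_cons_of_mem _ he))
    have hS : ∀ i ∈ Finset.Icc 1 n, (pushedBySh ((⟨[], 0 :: List.range' 1 n, ∅⟩, ETrans.sh) :: rest) i = true ↔ pushedBySh rest i = true) := by
      intro i hi
      have : 0 ≠ i := by have := Finset.mem_Icc.1 hi; omega
      rw [(hpc i).1]; simp [this]
    have hR : ∀ i ∈ Finset.Icc 1 n, (pushedByRa ((⟨[], 0 :: List.range' 1 n, ∅⟩, ETrans.sh) :: rest) i = true ↔ pushedByRa rest i = true) := by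
      intro i hi
      rw [(hpc i).2]; simp
    rw [Finset.filter_congr hS, Finset.filter_congr hR]
    constructor
    · have hes : escore n fsh fra frl fre ((⟨[], 0 :: List.range' 1 n, ∅⟩, ETrans.sh) :: rest)
          = fsh none 0 + escore n fsh fra frl fre rest := by
        simp [escore, stackFeat, bufFeat]
      have hI : Finset.Icc 1 n = (List.range' 1 n).toFinset := by
        ext i; simp only [Finset.mem_Icc, List.mem_toFinset, hmem]
      rw [hes, i1, Finset.sum_filter, Finset.sum_filter, add_assoc, ← Finset.sum_add_distrib, hI,
        List.sum_toFinset _ (List.nodup_range')]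
      simp only [List.map_cons, List.map_nil, List.sum_cons, List.sum_nil, pendCost, if_true, add_zero]
      rfl
    · ext ⟨a, b⟩
      have := i2 a b
      simp only [hmem] at this
      rw [this]
      simp only [Finset.mem_union, Finset.mem_image, Finset.mem_filter, Finset.mem_Icc, Prod.mk.injEq]
      grind
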